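/- Let n ≥ 1, α_1, ..., α_n ∈ ℂ, β_1, ..., β_n ∈ ℂ with β_j ≠ 0 for all j, and let P_0, P_1, ..., P_n ∈ ℂ[z] satisfy P_0 = k for a nonzero constant k ∈ ℂ and the three-term recurrence z·P_j(z) = β_j P_{j-1}(z) + α_{j+1} P_j(z) + β_{j+1} P_{j+1}(z) for 0 ≤ j ≤ n-1, with the conventions P_{-1} = 0 and β_0 = 0. Let c_0, ..., c_n ∈ ℂ with c_n ≠ 0, let p(z) = Σ_{j=0}^n c_j P_j(z), and let C = A + e_n q^T be the generalized colleague matrix. Then the characteristic polynomial of C satisfies c_n · (k / (β_1 β_2 ⋯ β_n)) · det(z·I − C) = p(z) as polynomials in z; that is, det(z·I − C) is the monic multiple of p. -/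

import Mathlib

open Matrix BigOperators

/-!
The vector `v = (P_0, …, P_{n-1})` satisfies `(z·I − C) v = w e_n`: all rows but the last are the
recurrence, and in the last row the correction `q` completes `β_n P_n` to `w = (β_n / c_n) p`.
Multiplying by the adjugate gives `det(z·I − C) P_0 = adj(z·I − C)_{1,n} w`. Since `C` is lower
Hessenberg, the minor behind that corner entry is triangular, and the entry is `β_1 ⋯ β_{n-1}`.
-/

section Hessenberg

open Polynomial

variable {R : Type*} {n : ℕ}

/-- A square matrix is lower Hessenberg if its entries above the first superdiagonal vanish. -/
def IsLowerHessenberg [Zero R] (M : Matrix (Fin n) (Fin n) R) : Prop :=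
  ∀ ⦃i j : Fin n⦄, (i : ℕ) + 1 < j → M i j = 0

variable [CommRing R]

theorem IsLowerHessenberg.charmatrix {M : Matrix (Fin n) (Fin n) R} (hM : IsLowerHessenberg M) :
    IsLowerHessenberg M.charmatrix := by
  intro i j hij
  have hne : i ≠ j := by rintro rfl; omega
  rw [charmatrix_apply_ne M i j hne, hM hij, map_zero, neg_zero]

theorem IsLowerHessenberg.adjugate_zero_last {M : Matrix (Fin (n + 1)) (Fin (n + 1)) R}
    (hM : IsLowerHessenberg M) :
    M.adjugate 0 (Fin.last n) = ∏ i : Fin n, -M i.castSucc i.succ := by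
  have hlower : (M.submatrix Fin.castSucc Fin.succ).IsLowerTriangular := by
    intro i j hij
    have hij' : (i : ℕ) < j := hij
    exact hM (by simpa using hij')
  rw [adjugate_fin_succ_eq_det_submatrix, Fin.succAbove_last, Fin.succAbove_zero,
    det_of_isLowerTriangular _ hlower, Finset.prod_neg]
  simp

theorem det_mul_apply_of_mulVec_eq_single {ι : Type*} [Fintype ι] [DecidableEq ι]
    {M : Matrix ι ι R} {v : ι → R} {i : ι} {w : R} (h : M *ᵥ v = Pi.single i w) (j : ι) :
    M.det * v j = M.adjugate j i * w := by
  have hadj : M.det • v = M.adjugate *ᵥ Pi.single i w := by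
    rw [← h, mulVec_mulVec, adjugate_mul, smul_mulVec, one_mulVec]
  simpa [mul_comm w] using congrFun hadj j

theorem IsLowerHessenberg.charpoly_mul_apply_zero {M : Matrix (Fin (n + 1)) (Fin (n + 1)) R}
    (hM : IsLowerHessenberg M) {v : Fin (n + 1) → R[X]} {w : R[X]}
    (h : (X : R[X]) • v = M.map C *ᵥ v + Pi.single (Fin.last n) w) :
    M.charpoly * v 0 = C (∏ i : Fin n, M i.castSucc i.succ) * w := by
  have hv : M.charmatrix *ᵥ v = Pi.single (Fin.last n) w := by
    rw [Matrix.charmatrix, sub_mulVec, scalar_apply, ← smul_one_eq_diagonal, smul_mulVec,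
      one_mulVec, h]
    exact add_sub_cancel_left _ _
  have hcorner : M.charmatrix.adjugate 0 (Fin.last n) = C (∏ i : Fin n, M i.castSucc i.succ) := by
    rw [hM.charmatrix.adjugate_zero_last, map_prod]
    refine Finset.prod_congr rfl fun i _ => ?_
    rw [charmatrix_apply_ne M _ _ i.castSucc_lt_succ.ne, neg_neg]
  rw [charpoly, det_mul_apply_of_mulVec_eq_single hv, hcorner]

end Hessenberg

section Tridiagonal

open Polynomial

variable {R S : Type*}

/-- The `n × n` tridiagonal matrix with diagonal `α 1, …, α n`, superdiagonal `β 1, …, β (n - 1)`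
and subdiagonal `γ 1, …, γ (n - 1)`. The sequences are indexed from `1`, so as to match the
recurrence `z P_j = γ_j P_{j-1} + α_{j+1} P_j + β_{j+1} P_{j+1}`. -/
def tridiagonal [Zero R] (n : ℕ) (α β γ : ℕ → R) : Matrix (Fin n) (Fin n) R :=
  Matrix.of fun i j : Fin n =>
    if (i : ℕ) = (j : ℕ) then α ((i : ℕ) + 1)
    else if (i : ℕ) + 1 = (j : ℕ) then β ((i : ℕ) + 1)
    else if (j : ℕ) + 1 = (i : ℕ) then γ ((j : ℕ) + 1)
    else 0

theorem isLowerHessenberg_tridiagonal [Zero R] (n : ℕ) (α β γ : ℕ → R) :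
    IsLowerHessenberg (tridiagonal n α β γ) := by
  intro i j hij
  rw [tridiagonal, of_apply, if_neg (by omega), if_neg (by omega), if_neg (by omega)]

theorem tridiagonal_castSucc_succ [Zero R] {n : ℕ} (α β γ : ℕ → R) (i : Fin n) :
    tridiagonal (n + 1) α β γ i.castSucc i.succ = β (i + 1) := by
  simp [tridiagonal]

theorem tridiagonal_map [Zero R] [Zero S] (n : ℕ) (α β γ : ℕ → R) {f : R → S} (hf : f 0 = 0) :
    (tridiagonal n α β γ).map f = tridiagonal n (f ∘ α) (f ∘ β) (f ∘ γ) := by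
  ext i j
  simp only [tridiagonal, map_apply, of_apply, apply_ite f, hf, Function.comp_apply]

theorem tridiagonal_mulVec [NonUnitalNonAssocSemiring R] (n : ℕ) (α β : ℕ → R)
    {γ : ℕ → R} (hγ0 : γ 0 = 0) (v : ℕ → R) (i : Fin n) :
    (tridiagonal n α β γ *ᵥ fun j => v j) i =
      γ i * v (i - 1) + α (i + 1) * v i + if (i : ℕ) + 1 < n then β (i + 1) * v (i + 1) else 0 := by
  have hsum : (tridiagonal n α β γ *ᵥ fun j => v j) i = ∑ j ∈ Finset.range n,
      ((if j = i - 1 then γ i else 0) + (if j = i then α (i + 1) else 0) +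
        if j = i + 1 then β (i + 1) else 0) * v j := by
    rw [mulVec, dotProduct, Finset.sum_range]
    refine Finset.sum_congr rfl fun j _ => congrArg (· * v j) ?_
    rw [tridiagonal, of_apply]
    grind
  have hi := i.isLt
  simp only [hsum, add_mul, ite_mul, zero_mul, Finset.sum_add_distrib, Finset.sum_ite_eq',
    Finset.mem_range, hi, if_true, (Nat.sub_le _ 1).trans_lt hi]

theorem X_smul_eq_tridiagonal_mulVec_add_single [CommSemiring R] (n : ℕ) (α β : ℕ → R)
    {γ : ℕ → R} (hγ0 : γ 0 = 0) {P : ℕ → R[X]}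
    (hrec : ∀ j ≤ n, X * P j = C (γ j) * P (j - 1) +
      C (α (j + 1)) * P j + C (β (j + 1)) * P (j + 1)) :
    (X : R[X]) • (fun j : Fin (n + 1) => P j) =
      (tridiagonal (n + 1) α β γ).map C *ᵥ (fun j => P j) +
        Pi.single (Fin.last n) (C (β (n + 1)) * P (n + 1)) := by
  funext i
  have hrow := hrec i i.is_le
  rw [tridiagonal_map _ _ _ _ C_0, Pi.add_apply,
    tridiagonal_mulVec _ _ _ (by simp [hγ0]), Pi.smul_apply, smul_eq_mul, hrow]
  obtain rfl | hi := eq_or_ne i (Fin.last n)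
  · simp
  · have hi' : (i : ℕ) < n := Fin.val_lt_last hi
    simp [hi, hi']

end Tridiagonal

section Colleague

open Polynomial

variable {R : Type*} [CommRing R]

/-- The colleague matrix `C = A + e_n qᵀ` of size `n`, where `A = tridiagonal n α β γ`; the complex
symmetric case of the literature is `γ = β`. -/
def colleagueMatrix (n : ℕ) (α β γ : ℕ → R) (q : Fin n → R) : Matrix (Fin n) (Fin n) R :=
  tridiagonal n α β γ + vecMulVec (fun i : Fin n => if (i : ℕ) = n - 1 then 1 else 0) q

theorem isLowerHessenberg_colleagueMatrix (n : ℕ) (α β γ : ℕ → R) (q : Fin n → R) :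
    IsLowerHessenberg (colleagueMatrix n α β γ q) := by
  intro i j hij
  have hi : (i : ℕ) ≠ n - 1 := by omega
  simp [colleagueMatrix, vecMulVec_apply, isLowerHessenberg_tridiagonal n α β γ hij, hi]

theorem colleagueMatrix_castSucc_succ {n : ℕ} (α β γ : ℕ → R) (q : Fin (n + 1) → R) (i : Fin n) :
    colleagueMatrix (n + 1) α β γ q i.castSucc i.succ = β (i + 1) := by
  have hi : (i : ℕ) ≠ n := i.isLt.ne
  simp [colleagueMatrix, tridiagonal_castSucc_succ, vecMulVec_apply, hi]

theorem colleagueMatrix_map_mulVec {n : ℕ} (α β γ : ℕ → R) (q : Fin (n + 1) → R)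
    (v : Fin (n + 1) → R[X]) :
    (colleagueMatrix (n + 1) α β γ q).map C *ᵥ v =
      (tridiagonal (n + 1) α β γ).map C *ᵥ v + Pi.single (Fin.last n) (∑ j, C (q j) * v j) := by
  have hrank_one : (vecMulVec (fun i : Fin (n + 1) => if (i : ℕ) = n + 1 - 1 then 1 else 0) q).map
      C = vecMulVec (Pi.single (Fin.last n) 1) (fun j => C (q j)) := by
    ext1 i j
    simp [vecMulVec_apply, Pi.single_apply, Fin.ext_iff, apply_ite C]
  rw [colleagueMatrix, Matrix.map_add _ (map_add _), add_mulVec, hrank_one, vecMulVec_mulVec,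
    ← Pi.single_smul, op_smul_eq_mul, one_mul, dotProduct]

theorem charpoly_colleagueMatrix_mul {n : ℕ} (α β : ℕ → R) {γ : ℕ → R} (hγ0 : γ 0 = 0)
    {P : ℕ → R[X]}
    (hrec : ∀ j ≤ n,
      X * P j = C (γ j) * P (j - 1) + C (α (j + 1)) * P j + C (β (j + 1)) * P (j + 1))
    (q : Fin (n + 1) → R) :
    (colleagueMatrix (n + 1) α β γ q).charpoly * P 0 =
      C (∏ j ∈ Finset.Icc 1 n, β j) * (C (β (n + 1)) * P (n + 1) - ∑ j, C (q j) * P j) := by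
  have hsuper : ∏ i : Fin n, colleagueMatrix (n + 1) α β γ q i.castSucc i.succ =
      ∏ j ∈ Finset.Icc 1 n, β j := by
    simp only [colleagueMatrix_castSucc_succ]
    rw [Fin.prod_univ_eq_prod_range (fun i => β (i + 1)), Finset.range_eq_Ico,
      Finset.prod_Ico_add' β 0 n 1, zero_add, Finset.Ico_add_one_right_eq_Icc]
  rw [← hsuper]
  refine IsLowerHessenberg.charpoly_mul_apply_zero
    (isLowerHessenberg_colleagueMatrix _ α β γ q) (v := fun j => P j) ?_
  rw [colleagueMatrix_map_mulVec, X_smul_eq_tridiagonal_mulVec_add_single n α β hγ0 hrec,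
    add_assoc, ← Pi.single_add, add_sub_cancel]

/-- The hypothesis `hq` is `q_j = -β_n c_j / c_n` with the denominator cleared. -/
theorem colleague_matrix_charpoly_general (n : ℕ) (α β γ : ℕ → R) (hγ0 : γ 0 = 0)
    (P : ℕ → R[X]) (k : R) (hP0 : P 0 = C k)
    (hrec : ∀ j, j + 1 ≤ n →
      X * P j = C (γ j) * P (j - 1) + C (α (j + 1)) * P j + C (β (j + 1)) * P (j + 1))
    (c : ℕ → R) (q : Fin n → R) (hq : ∀ j, c n * q j = -(β n * c j)) :
    C (c n * k) * (colleagueMatrix n α β γ q).charpoly =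
      C (∏ j ∈ Finset.Icc 1 n, β j) * ∑ j ∈ Finset.range (n + 1), C (c j) * P j := by
  obtain _ | n := n
  · simp [hP0]
  have hlast_row : C (c (n + 1)) * (C (β (n + 1)) * P (n + 1) - ∑ j, C (q j) * P j) =
      C (β (n + 1)) * ∑ j ∈ Finset.range (n + 2), C (c j) * P j := by
    rw [Finset.sum_range_succ, ← Fin.sum_univ_eq_sum_range (fun j => C (c j) * P j),
      mul_sub, mul_add, Finset.mul_sum, Finset.mul_sum]
    simp only [← mul_assoc, ← C_mul, hq, C_neg, neg_mul, Finset.sum_neg_distrib]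
    rw [mul_comm (c (n + 1))]
    ring
  have hcharpoly := charpoly_colleagueMatrix_mul α β hγ0 (fun j hj => hrec j (by omega)) q
  rw [hP0] at hcharpoly
  rw [Finset.prod_Icc_succ_top (by omega), C_mul, C_mul]
  linear_combination C (c (n + 1)) * hcharpoly + C (∏ j ∈ Finset.Icc 1 n, β j) * hlast_row

end Colleague

theorem C_div_mul_eq_of_C_mul_eq {K : Type*} [Field K] {a b : K} (hb : b ≠ 0) {f g : Polynomial K}
    (h : Polynomial.C a * f = Polynomial.C b * g) : Polynomial.C (a / b) * f = g := by
  rw [div_eq_inv_mul, Polynomial.C_mul, mul_assoc, h, ← mul_assoc, ← Polynomial.C_mul,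
    inv_mul_cancel₀ hb, Polynomial.C_1, one_mul]

/-- The characteristic polynomial `det(z·I − C)` of the generalized
colleague matrix is the monic multiple of `p`:
`c_n · (k / (β_1 ⋯ β_n)) · det(z·I − C) = p`. -/
theorem colleague_matrix_charpoly
    (n : ℕ) (hn : 1 ≤ n) (α β : ℕ → ℂ) (hβ0 : β 0 = 0)
    (hβ : ∀ j, 1 ≤ j → j ≤ n → β j ≠ 0)
    (P : ℕ → Polynomial ℂ) (k : ℂ) (hk : k ≠ 0) (hP0 : P 0 = Polynomial.C k)
    (hrec : ∀ j, j + 1 ≤ n →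
      Polynomial.X * P j
        = Polynomial.C (β j) * P (j - 1) + Polynomial.C (α (j + 1)) * P j
          + Polynomial.C (β (j + 1)) * P (j + 1))
    (c : ℕ → ℂ) (hc : c n ≠ 0)
    (p : Polynomial ℂ)
    (hp : p = ∑ j ∈ Finset.range (n + 1), Polynomial.C (c j) * P j)
    (A : Matrix (Fin n) (Fin n) ℂ)
    (hA : A = Matrix.of fun i j : Fin n =>
      if (i : ℕ) = (j : ℕ) then α ((i : ℕ) + 1)
      else if (i : ℕ) + 1 = (j : ℕ) then β ((i : ℕ) + 1)
      else if (j : ℕ) + 1 = (i : ℕ) then β ((j : ℕ) + 1)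
      else 0)
    (e : Fin n → ℂ) (he : e = fun i : Fin n => if (i : ℕ) = n - 1 then 1 else 0)
    (qv : Fin n → ℂ) (hqv : qv = fun j : Fin n => -β n * (c (j : ℕ) / c n))
    (Cmat : Matrix (Fin n) (Fin n) ℂ) (hC : Cmat = A + Matrix.vecMulVec e qv) :
    Polynomial.C (c n * (k / ∏ j ∈ Finset.Icc 1 n, β j)) * Cmat.charpoly = p := by
  subst hp hA he hqv hC
  have hprod : ∏ j ∈ Finset.Icc 1 n, β j ≠ 0 :=
    Finset.prod_ne_zero_iff.mpr fun j hj => hβ j (Finset.mem_Icc.mp hj).1 (Finset.mem_Icc.mp hj).2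
  rw [← mul_div_assoc]
  exact C_div_mul_eq_of_C_mul_eq hprod <|
    colleague_matrix_charpoly_general n α β β hβ0 P k hP0 hrec c _ fun j => by field_simp
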